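/- arXiv:1611.01938 — 2 statements merged into one kernel-verified Lean document; each statement's English description precedes it below -/
import Mathlib

section
/- For any finite simple graph G (not necessarily connected), there exists a finite tree T such that the characteristic polynomial P(G,x) of the adjacency matrix of G divides the characteristic polynomial P(T,x) of the adjacency matrix of T. (Corollary 3.5.) -/
open Polynomial

/-!
Call `s` a value at `λ` if some tree with a root `r` carries a function `f` with `f r = 1` that
satisfies the eigenvector equation for `λ` at every vertex except `r`, and whose sum over the
neighbours of `r` is `s`. Joining the roots of two such trees by an edge, and scaling the second
function, shows that `a + 1 / (λ - b)` is a value when `a` and `b ≠ λ` are (`TreeValue`). So the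
values contain an additive monoid closed under `b ↦ 1 / (λ - b)`, and if it contains `λ` itself,
then `λ` is an eigenvalue of a tree, with an eigenvector that does not vanish at the root.

Let `λ ≠ 0` be an eigenvalue of `G` and `θ = λ²`. The `a ∈ ℚ(θ)` such that `λ a` lies in this
monoid form an additive monoid `L` closed under `s ↦ (θ (1 - s))⁻¹`, and the point is that `1 ∈ L`.

* `L` is a group (`neg_mem_of_closed`). All conjugates of `θ` are positive, being eigenvalues of
  the square of the adjacency matrix. Embed `ℚ(θ)` in `ℝ^ι` by its conjugates. The closure of the
  positive rational multiples of `L` is a closed convex cone, stable under `x ↦ -1 / (θ x)`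
  because `n (θ (1 - n s))⁻¹` tends to `-1 / (θ s)`. It contains `1 / θ` and `-1`, hence
  `1 / (r θ - 1)` for real `r > 0`; for `r` near the inverse of a conjugate of `θ` this vector
  is close to a large multiple, of either sign, of a standard basis vector. So the cone is dense
  (`dense_ratCone`), and `-a` is a real positive combination of `a` and elements of `L`. A
  `ℚ`-linear map `ℝ → ℚ` that keeps the coefficients positive turns this into a positive integral
  relation.
* If `L` is a group, then `1 ∈ L` (`one_mem_of_addSubgroup`). By induction on `n < d = deg θ`,
  every `c(θ) / (θ q(θ))` with `q` monic of degree `n` and `deg c ≤ n` is in `L`; here it is used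
  that polynomials of degree at most `n` are integral combinations of monic ones of degree `n`. If
  the minimal polynomial of `θ` is `X * q + h₀`, then `-h₀ / (θ q(θ)) = 1`. This uses that `θ` is
  an algebraic integer.

To get multiplicities, hang below one root `n + 1` copies of a tree with eigenvalue `μ` for each
root `μ` of `P(G, x)`, counted with multiplicity. If `k ≥ 1` is the multiplicity of `μ`, this gives
`(n + 1) k` independent functions vanishing at the root and satisfying the eigenvector equation off
the root; the equation at the root costs one dimension, and `(n + 1) k - 1 ≥ k` since `n ≥ k ≥ 1`.
As `P(G, x)` splits over `ℝ`, it divides `P(T, x)`.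
-/

/-! ### Integral elements in groups closed under inversion -/

/-- An additive group of integer polynomials containing every monic polynomial of degree `n`
contains every polynomial of degree at most `n`. -/
theorem mem_of_forall_monic (S : AddSubgroup ℤ[X]) (n : ℕ)
    (h : ∀ q : ℤ[X], q.Monic → q.natDegree = n → q ∈ S) (c : ℤ[X]) (hc : c.natDegree ≤ n) :
    c ∈ S := by
  have hX : (X ^ n : ℤ[X]) ∈ S := h _ (monic_X_pow n) (natDegree_X_pow n)
  -- Split off the leading term: `c = a * X ^ n + c'` with `c'` of degree `< n`.
  have hsplit : c = c.coeff n • X ^ n + ((X ^ n + c.erase n) - X ^ n) := by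
    conv_lhs => rw [← monomial_add_erase c n]
    rw [← C_mul_X_pow_eq_monomial, smul_eq_C_mul]
    ring
  have hdeg : (c.erase n).degree < (n : ℕ) := by
    rw [degree_lt_iff_coeff_zero]
    intro m hm
    rw [coeff_erase]
    split_ifs with h1
    · rfl
    · exact coeff_eq_zero_of_natDegree_lt (by omega)
  rw [hsplit]
  refine S.add_mem (S.zsmul_mem hX _) (S.sub_mem (h _ (monic_X_pow_add hdeg) ?_) hX)
  rw [natDegree_add_eq_left_of_degree_lt, natDegree_X_pow]
  simpa using hdeg

theorem natDegree_monic_sub_le {p q : ℤ[X]} (hp : p.Monic) (hq : q.Monic) {n : ℕ}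
    (hpn : p.natDegree = n + 1) (hqn : q.natDegree = n + 1) : (p - q).natDegree ≤ n := by
  have hlt : (p - q).degree < p.degree := by
    refine degree_sub_lt_left ?_ hp.ne_zero ?_
    · rw [degree_eq_natDegree hp.ne_zero, degree_eq_natDegree hq.ne_zero, hpn, hqn]
    · rw [hp.leadingCoeff, hq.leadingCoeff]
  rw [degree_eq_natDegree hp.ne_zero, hpn] at hlt
  by_cases h0 : p - q = 0
  · simp [h0]
  · rw [degree_eq_natDegree h0] at hlt
    exact Nat.lt_succ_iff.mp (by exact_mod_cast hlt)

/-- The additive map `c ↦ c(θ) * y`. -/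
noncomputable def evalMul {K : Type*} [Field K] (θ y : K) : ℤ[X] →+ K :=
  (AddMonoidHom.mulRight y).comp (aeval θ : ℤ[X] →ₐ[ℤ] K).toRingHom.toAddMonoidHom

theorem evalMul_apply {K : Type*} [Field K] (θ y : K) (c : ℤ[X]) :
    evalMul θ y c = aeval θ c * y := rfl

/-- If `θ ≠ 0` is a root of a monic integral polynomial `h` of degree `d > 0`, and of none of lower
degree, then `1` lies in every additive subgroup closed under `s ↦ (θ (1 - s))⁻¹`. -/
theorem one_mem_of_addSubgroup {K : Type*} [Field K] (θ : K) (L : AddSubgroup K)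
    (hL : ∀ s ∈ L, (θ * (1 - s))⁻¹ ∈ L)
    (d : ℕ) (hmin : ∀ q : ℤ[X], q.Monic → q.natDegree < d → aeval θ q ≠ 0)
    (h : ℤ[X]) (hmonic : h.Monic) (hdeg : h.natDegree = d) (hd : 0 < d) (hroot : aeval θ h = 0)
    (hθ : θ ≠ 0) : 1 ∈ L := by
  have key : ∀ n, n < d → ∀ q : ℤ[X], q.Monic → q.natDegree = n → ∀ c : ℤ[X], c.natDegree ≤ n →
      aeval θ c * (θ * aeval θ q)⁻¹ ∈ L := by
    intro n
    induction n with
    | zero =>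
      intro _ q hq hqn c hc
      obtain rfl : q = 1 := hq.natDegree_eq_zero.mp hqn
      rw [eq_C_of_natDegree_le_zero hc]
      have h0 := L.zsmul_mem (hL 0 L.zero_mem) (c.coeff 0)
      simpa using h0
    | succ n ih =>
      intro hn
      -- Every `c / q` with `q` monic of degree `n + 1` and `c` of degree at most `n`.
      have step : ∀ q : ℤ[X], q.Monic → q.natDegree = n + 1 → ∀ c : ℤ[X], c.natDegree ≤ n →
          aeval θ c * (aeval θ q)⁻¹ ∈ L := by
        intro q hq hqn
        have hq0 := hmin q hq (by omega)
        refine mem_of_forall_monic (L.comap (evalMul θ (aeval θ q)⁻¹)) n ?_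
        intro p hp hpn
        have hp0 := hmin p hp (by omega)
        have hc : (X * p - q).natDegree ≤ n := by
          refine natDegree_monic_sub_le (monic_X.mul hp) hq ?_ hqn
          rw [natDegree_X_mul hp.ne_zero, hpn]
        have hmem := hL _ (ih (by omega) p hp hpn _ hc)
        rw [AddSubgroup.mem_comap, evalMul_apply]
        have e : θ * (1 - aeval θ (X * p - q) * (θ * aeval θ p)⁻¹) = aeval θ q / aeval θ p := by
          simp only [map_sub, map_mul, aeval_X]
          field_simp
          ring
        rwa [e, inv_div, div_eq_mul_inv] at hmem
      intro q hq hqn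
      have hq0 := hmin q hq (by omega)
      refine mem_of_forall_monic (L.comap (evalMul θ (θ * aeval θ q)⁻¹)) (n + 1) ?_
      intro p hp hpn
      have hp0 := hmin p hp (by omega)
      have hc : (p - q).natDegree ≤ n := natDegree_monic_sub_le hp hq hpn hqn
      have hmem := hL _ (step p hp hpn _ hc)
      rw [AddSubgroup.mem_comap, evalMul_apply]
      have e : θ * (1 - aeval θ (p - q) * (aeval θ p)⁻¹) = θ * aeval θ q / aeval θ p := by
        simp only [map_sub]
        field_simp
        ring
      rwa [e, inv_div, div_eq_mul_inv] at hmem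
  -- With `h = X * q + h(0)`, the element `-h(0) / (θ q(θ))` given by `key` equals `1`.
  obtain ⟨n, rfl⟩ : ∃ n, d = n + 1 := ⟨d - 1, by omega⟩
  have hqdeg : h.divX.natDegree = n := by rw [natDegree_divX_eq_natDegree_tsub_one, hdeg]; rfl
  have hq : h.divX.Monic := by
    rw [Monic, leadingCoeff, hqdeg, coeff_divX, ← hdeg]
    exact hmonic
  have hq0 := hmin _ hq (by omega)
  have := key n (by omega) h.divX hq hqdeg (-C (h.coeff 0)) (by simp)
  convert this using 1
  rw [eq_comm, mul_inv_eq_one₀ (mul_ne_zero hθ hq0)]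
  have e := congrArg (aeval θ) (X_mul_divX_add h)
  rw [hroot, map_add, map_mul, aeval_X] at e
  rw [map_neg, eq_comm, eq_neg_iff_add_eq_zero]
  exact e

/-! ### Positive relations -/

section
open Filter Topology

/-- Finitely many positive reals stay positive under some `ℚ`-linear map `ℝ → ℚ`. -/
theorem exists_linearMap_pos {κ : Type*} [Finite κ] (r : κ → ℝ) (hr : ∀ k, 0 < r k) :
    ∃ f : ℝ →ₗ[ℚ] ℚ, ∀ k, 0 < f (r k) := by
  classical
  cases nonempty_fintype κ
  let b := Module.Basis.ofVectorSpace ℚ ℝ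
  let s : Finset _ := Finset.univ.biUnion fun k => (b.repr (r k)).support
  -- Rational values close to the basis elements give a map close to the inclusion on each `r k`.
  have hopen : IsOpen {g : s → ℝ | ∀ k, 0 < ∑ i : s, (b.repr (r k) i : ℝ) * g i} := by
    simp only [Set.ofPred_forall]
    exact isOpen_iInter_of_finite fun k => isOpen_lt continuous_const (by fun_prop)
  have hval : ∀ k, ∑ i : s, (b.repr (r k) i : ℝ) * b i = r k := by
    intro k
    conv_rhs => rw [← b.linearCombination_repr (r k), Finsupp.linearCombination_apply]
    rw [Finsupp.sum_of_support_subset (s := s) _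
      (Finset.subset_biUnion_of_mem (fun k => (b.repr (r k)).support) (Finset.mem_univ k)) _
      (by simp)]
    simp only [Rat.smul_def]
    exact Finset.sum_coe_sort s fun i => (b.repr (r k) i : ℝ) * b i
  have hdense : DenseRange fun (q : s → ℚ) (i : s) => (q i : ℝ) :=
    DenseRange.piMap fun _ => Rat.denseRange_cast
  obtain ⟨q, hq⟩ := hdense.exists_mem_open hopen ⟨fun i => b i, fun k => by rw [hval]; exact hr k⟩
  refine ⟨b.constr ℚ (fun i => if h : i ∈ s then q ⟨i, h⟩ else 0), fun k => ?_⟩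
  rw [Module.Basis.constr_apply, Finsupp.sum_of_support_subset (s := s) _
      (Finset.subset_biUnion_of_mem (fun k => (b.repr (r k)).support) (Finset.mem_univ k)) _
      (by simp), ← Finset.sum_coe_sort]
  have := hq k
  simp only [Finset.coe_mem, Subtype.coe_eta, dite_true, smul_eq_mul]
  beta_reduce at this
  exact_mod_cast this

/-- Every vector `v` satisfies a linear relation with elements of a given dense subset of `ℝ^ι` in
which all coefficients are positive. -/
theorem exists_pos_relation {ι : Type*} [Fintype ι] (D : Set (ι → ℝ)) (hD : Dense D) (v : ι → ℝ) :
    ∃ (c : ℝ) (r : ι → ℝ) (w : ι → ℝ) (y : ι → ι → ℝ), 0 < c ∧ (∀ i, 0 < r i) ∧ w ∈ D ∧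
      (∀ i, y i ∈ D) ∧ c • v + c • w + ∑ i, r i • y i = 0 := by
  classical
  -- Choose `y i` near the standard basis vectors and `w` near `-v - (1, …, 1)`; Cramer's rule then
  -- gives coefficients near `1`.
  let S : Set ((ι → ι → ℝ) × (ι → ℝ)) :=
    {p | 0 < (Matrix.of p.1).transpose.det ∧
      ∀ i, 0 < ((Matrix.of p.1).transpose.adjugate.mulVec (-v - p.2)) i}
  have hc : Continuous fun p : (ι → ι → ℝ) × (ι → ℝ) => (Matrix.of p.1).transpose :=
    Continuous.matrix_transpose continuous_fst
  have hS : IsOpen S := by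
    have h : ∀ i, IsOpen {p : (ι → ι → ℝ) × (ι → ℝ) |
        0 < ((Matrix.of p.1).transpose.adjugate.mulVec (-v - p.2)) i} := fun i =>
      isOpen_lt continuous_const <| (continuous_apply i).comp
        (hc.matrix_adjugate.matrix_mulVec (continuous_const.sub continuous_snd))
    have h' : IsOpen {p : (ι → ι → ℝ) × (ι → ℝ) |
        ∀ i, 0 < ((Matrix.of p.1).transpose.adjugate.mulVec (-v - p.2)) i} := by
      simpa only [Set.ofPred_forall] using isOpen_iInter_of_finite h
    exact (isOpen_lt continuous_const hc.matrix_det).inter h'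
  have hne : S.Nonempty := by
    refine ⟨((1 : Matrix ι ι ℝ), -v - 1), ?_⟩
    have h1 : (Matrix.of (1 : Matrix ι ι ℝ)).transpose = 1 := Matrix.transpose_one
    simp only [S, Set.mem_ofPred_eq, h1]
    simp
  obtain ⟨⟨y, w⟩, ⟨hy, hw⟩, hdet, hadj⟩ :=
    ((dense_pi Set.univ fun (_ : ι) _ => hD).prod hD).exists_mem_open hS hne
  refine ⟨_, _, w, y, hdet, hadj, hw, fun i => hy i trivial, ?_⟩
  have h := congrArg (fun M : Matrix ι ι ℝ => M.mulVec (-v - w))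
    (Matrix.mul_adjugate (Matrix.of y).transpose)
  simp only [← Matrix.mulVec_mulVec, Matrix.smul_mulVec, Matrix.one_mulVec] at h
  rw [Matrix.mulVec_eq_sum] at h
  ext j
  have hj := congrFun h j
  simp [Finset.sum_apply] at hj ⊢
  linarith

/-! ### Density of the cone of conjugate vectors -/

/-- The positive rational multiples of the vectors of conjugates `(σ i s)_i`, for `s ∈ L`. -/
def ratCone {K ι : Type*} [Field K] (σ : ι → K →+* ℝ) (L : AddSubmonoid K) : Set (ι → ℝ) :=
  {x | ∃ q : ℚ, 0 < q ∧ ∃ s ∈ L, x = fun i => (q : ℝ) * σ i s}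

section
variable {K ι : Type*} [Field K] (σ : ι → K →+* ℝ) (L : AddSubmonoid K)

theorem ratCone_add {x y : ι → ℝ} (hx : x ∈ ratCone σ L) (hy : y ∈ ratCone σ L) :
    x + y ∈ ratCone σ L := by
  obtain ⟨p, hp, s, hs, rfl⟩ := hx
  obtain ⟨q, hq, t, ht, rfl⟩ := hy
  -- Put both multiples over the common denominator `p.den * q.den`.
  have hp' : (p.num.toNat : ℤ) = p.num := Int.toNat_of_nonneg (Rat.num_pos.mpr hp).le
  have hq' : (q.num.toNat : ℤ) = q.num := Int.toNat_of_nonneg (Rat.num_pos.mpr hq).le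
  have hp2 : (p : ℝ) = (p.num.toNat : ℝ) / p.den := by
    rw [Rat.cast_def, ← Int.cast_natCast p.num.toNat, hp']
  have hq2 : (q : ℝ) = (q.num.toNat : ℝ) / q.den := by
    rw [Rat.cast_def, ← Int.cast_natCast q.num.toNat, hq']
  have hpd : (p.den : ℝ) ≠ 0 := by exact_mod_cast p.den_ne_zero
  have hqd : (q.den : ℝ) ≠ 0 := by exact_mod_cast q.den_ne_zero
  refine ⟨1 / (p.den * q.den), by have := p.den_pos; have := q.den_pos; positivity,
    (p.num.toNat * q.den) • s + (q.num.toNat * p.den) • t,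
    L.add_mem (L.nsmul_mem hs _) (L.nsmul_mem ht _), ?_⟩
  ext i
  simp only [Pi.add_apply, hp2, hq2, map_add, map_mul, map_natCast, nsmul_eq_mul]
  push_cast
  field_simp

theorem closure_ratCone_add {x y : ι → ℝ} (hx : x ∈ closure (ratCone σ L))
    (hy : y ∈ closure (ratCone σ L)) : x + y ∈ closure (ratCone σ L) :=
  map_mem_closure₂ continuous_add hx hy fun _ ha _ hb => ratCone_add σ L ha hb

theorem closure_ratCone_smul {c : ℝ} (hc : 0 < c) {x : ι → ℝ}
    (hx : x ∈ closure (ratCone σ L)) : c • x ∈ closure (ratCone σ L) := by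
  have hc' : c ∈ closure ((fun q : ℚ => (q : ℝ)) '' {q | 0 < q}) := by
    rw [Metric.mem_closure_iff]
    intro ε hε
    obtain ⟨q, h1, h2⟩ := exists_rat_btwn (show c < c + ε by linarith)
    refine ⟨q, ⟨q, by exact_mod_cast hc.trans h1, rfl⟩, ?_⟩
    rw [Real.dist_eq, abs_lt]
    constructor <;> linarith
  refine map_mem_closure₂ continuous_smul hc' hx ?_
  rintro _ ⟨q, hq, rfl⟩ _ ⟨p, hp, s, hs, rfl⟩
  refine ⟨q * p, mul_pos hq hp, s, hs, ?_⟩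
  ext i
  simp [mul_assoc]

variable [Fintype ι] {σ L} {θ : K}

/-- Letting `n → ∞` in `n (θ (1 - n s))⁻¹` shows that the closed cone is stable under
`x ↦ -(θ x)⁻¹`. -/
theorem closure_ratCone_neg_inv (hpos : ∀ i, 0 < σ i θ)
    (hL : ∀ s ∈ L, (θ * (1 - s))⁻¹ ∈ L)
    {x : ι → ℝ} (hx : x ∈ closure (ratCone σ L))
    (hx0 : ∀ i, x i ≠ 0) : (fun i => -(σ i θ * x i)⁻¹) ∈ closure (ratCone σ L) := by
  have hcont : ContinuousAt (fun (x : ι → ℝ) i => -(σ i θ * x i)⁻¹) x := by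
    refine continuousAt_pi.mpr fun i => ContinuousAt.neg (ContinuousAt.inv₀ ?_ ?_)
    · exact (continuous_const.mul (continuous_apply i)).continuousAt
    · exact mul_ne_zero (hpos i).ne' (hx0 i)
  have hev : ∀ᶠ y : ι → ℝ in 𝓝 x, ∀ i, y i ≠ 0 :=
    eventually_all.mpr fun i => (continuous_apply i).continuousAt.eventually_ne (hx0 i)
  have hfreq : ∃ᶠ y in 𝓝 x, (fun i => -(σ i θ * y i)⁻¹) ∈ closure (ratCone σ L) := by
    refine ((mem_closure_iff_frequently.mp hx).and_eventually hev).mono ?_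
    rintro _ ⟨⟨q, hq, s, hs, rfl⟩, hy⟩
    have hq' : (0 : ℝ) < q := by exact_mod_cast hq
    have hlim : Tendsto (fun (n : ℕ) i => ((n : ℝ) / q) * σ i (θ * (1 - n • s))⁻¹) atTop
        (𝓝 fun i => -(σ i θ * (q * σ i s))⁻¹) := by
      refine tendsto_pi_nhds.mpr fun i => ?_
      have hsi : σ i s ≠ 0 := fun e => hy i (by simp [e])
      have hinv : Tendsto (fun n : ℕ => (q * σ i θ * ((n : ℝ)⁻¹ - σ i s))⁻¹) atTop
          (𝓝 (q * σ i θ * (0 - σ i s))⁻¹) := by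
        refine Tendsto.inv₀ (tendsto_const_nhds.mul
          (tendsto_inv_atTop_nhds_zero_nat.sub tendsto_const_nhds)) ?_
        exact mul_ne_zero (mul_ne_zero hq'.ne' (hpos i).ne') (by simpa using hsi)
      have hval : (q * σ i θ * (0 - σ i s))⁻¹ = -(σ i θ * (q * σ i s))⁻¹ := by
        rw [← inv_neg]; ring_nf
      rw [hval] at hinv
      refine hinv.congr' ?_
      filter_upwards [eventually_gt_atTop 0] with n hn
      have hn' : (n : ℝ) ≠ 0 := by exact_mod_cast hn.ne'
      have e : (n : ℝ)⁻¹ - σ i s = (1 - n * σ i s) / n := by field_simp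
      rw [e]
      simp only [map_inv₀, map_mul, map_sub, map_one, nsmul_eq_mul, map_natCast, mul_inv, inv_div]
      ring
    refine isClosed_closure.mem_of_tendsto hlim ?_
    filter_upwards [eventually_gt_atTop 0] with n hn
    refine subset_closure ⟨n / q, by positivity, _, hL _ (L.nsmul_mem hs n), ?_⟩
    ext i
    push_cast
    rfl
  exact isClosed_closure.mem_of_frequently_of_tendsto hfreq hcont

/-- Every real multiple of a standard basis vector lies in the closed cone: the vectors
`((r θ - 1)⁻¹)_i` blow up in one coordinate when `r` approaches the inverse of one conjugate. -/
theorem single_mem_closure_ratCone [DecidableEq ι] (hpos : ∀ i, 0 < σ i θ)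
    (hL : ∀ s ∈ L, (θ * (1 - s))⁻¹ ∈ L)
    (hinj : Function.Injective fun i => σ i θ) (i : ι) (c : ℝ) :
    Pi.single i c ∈ closure (ratCone σ L) := by
  have hθ : (fun j => (σ j θ)⁻¹) ∈ closure (ratCone σ L) := by
    refine subset_closure ⟨1, one_pos, _, hL 0 L.zero_mem, ?_⟩
    ext j
    simp
  have hneg : (fun _ : ι => (-1 : ℝ)) ∈ closure (ratCone σ L) := by
    convert closure_ratCone_neg_inv hpos hL hθ (fun j => inv_ne_zero (hpos j).ne') using 2 with j
    rw [mul_inv_cancel₀ (hpos j).ne', inv_one]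
  have hr : ∀ r : ℝ, 0 < r → (∀ j, r * σ j θ ≠ 1) →
      (fun j => (r * σ j θ - 1)⁻¹) ∈ closure (ratCone σ L) := by
    intro r hr hne
    convert closure_ratCone_neg_inv hpos hL
      (closure_ratCone_add σ L hθ (closure_ratCone_smul σ L hr hneg)) ?_ using 2 with j
    · simp only [Pi.add_apply, Pi.smul_apply, smul_eq_mul]
      rw [← inv_neg, mul_add, mul_inv_cancel₀ (hpos j).ne']
      ring_nf
    · intro j hj
      simp only [Pi.add_apply, Pi.smul_apply, smul_eq_mul] at hj
      apply hne j
      have := (hpos j).ne'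
      field_simp at hj
      linarith
  rcases eq_or_ne c 0 with rfl | hc
  · rw [Pi.single_zero]
    exact subset_closure ⟨1, one_pos, 0, L.zero_mem, by ext; simp⟩
  -- With `r = (1 + c t) / σ i θ`, the coordinate `i` of `t * (r θ - 1)⁻¹` is `1 / c`.
  have hlim : Tendsto (fun t : ℝ => fun j => (c ^ 2 * t) *
      ((1 + c * t) / σ i θ * σ j θ - 1)⁻¹) (𝓝[>] 0) (𝓝 (Pi.single i c)) := by
    refine tendsto_pi_nhds.mpr fun j => ?_
    by_cases hj : j = i
    · subst hj
      rw [Pi.single_eq_same]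
      refine tendsto_const_nhds.congr' ?_
      filter_upwards [self_mem_nhdsWithin] with t ht
      have ht' : t ≠ 0 := (Set.mem_Ioi.mp ht).ne'
      rw [div_mul_cancel₀ _ (hpos j).ne', add_sub_cancel_left]
      field_simp
    · rw [Pi.single_eq_of_ne hj]
      have hne : (1 + c * 0) / σ i θ * σ j θ - 1 ≠ 0 := by
        have := (hpos i).ne'
        intro h
        field_simp at h
        exact hj (hinj (by simp only; linarith))
      have hcont : ContinuousAt (fun t : ℝ => (c ^ 2 * t) *
          ((1 + c * t) / σ i θ * σ j θ - 1)⁻¹) 0 :=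
        ContinuousAt.mul (by fun_prop) (ContinuousAt.inv₀ (by fun_prop) hne)
      have := hcont.tendsto
      simp only [mul_zero, zero_mul] at this
      exact this.mono_left nhdsWithin_le_nhds
  refine isClosed_closure.mem_of_tendsto hlim ?_
  have hevpos : ∀ᶠ t : ℝ in 𝓝[>] 0, 0 < 1 + c * t := by
    have : ContinuousAt (fun t : ℝ => 1 + c * t) 0 := by fun_prop
    exact (this.eventually_const_lt (by simp)).filter_mono nhdsWithin_le_nhds
  have hevne : ∀ᶠ t : ℝ in 𝓝[>] 0, ∀ j, (1 + c * t) / σ i θ * σ j θ ≠ 1 := by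
    refine eventually_all.mpr fun j => ?_
    by_cases hj : j = i
    · subst hj
      filter_upwards [self_mem_nhdsWithin] with t ht
      have ht' : t ≠ 0 := (Set.mem_Ioi.mp ht).ne'
      rw [div_mul_cancel₀ _ (hpos j).ne']
      simp [hc, ht']
    · have : ContinuousAt (fun t : ℝ => (1 + c * t) / σ i θ * σ j θ) 0 := by fun_prop
      refine (this.eventually_ne ?_).filter_mono nhdsWithin_le_nhds
      have := (hpos i).ne'
      intro h
      field_simp at h
      exact hj (hinj (by simp only; linarith))
  filter_upwards [hevpos, hevne, self_mem_nhdsWithin] with t hp hne ht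
  have ht' : 0 < t := ht
  exact closure_ratCone_smul σ L (by positivity) (hr _ (div_pos hp (hpos i)) hne)

/-- The closed cone contains the vectors `Pi.single i c` for all real `c`, hence is everything. -/
theorem dense_ratCone (hpos : ∀ i, 0 < σ i θ)
    (hL : ∀ s ∈ L, (θ * (1 - s))⁻¹ ∈ L)
    (hinj : Function.Injective fun i => σ i θ) : Dense (ratCone σ L) := by
  classical
  intro x
  have hzero : (0 : ι → ℝ) ∈ closure (ratCone σ L) :=
    subset_closure ⟨1, one_pos, 0, L.zero_mem, by ext; simp⟩
  rw [← Finset.univ_sum_single x]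
  exact Finset.sum_induction _ (· ∈ closure (ratCone σ L))
    (fun _ _ => closure_ratCone_add σ L) hzero
    fun i _ => single_mem_closure_ratCone hpos hL hinj i (x i)

end

end

/-! ### Closure under negation -/

section
variable {K ι : Type*} [Field K] [Algebra ℚ K] [Fintype ι] {σ : ι → K →+* ℝ} {θ : K}

/-- A positive real relation between the conjugates of elements of `K` yields a positive integral
relation between the elements. Here `K` is generated by `θ`, of degree at most `|ι|`, and the
conjugates `σ i θ` are distinct. -/
theorem exists_nat_relation (hinj : Function.Injective fun i => σ i θ)
    (hgen : ∀ a : K, ∃ p : ℚ[X], p.natDegree < Fintype.card ι ∧ a = aeval θ p)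
    {κ : Type*} [Fintype κ] (m : κ → K) (ρ : κ → ℝ) (hρ : ∀ k, 0 < ρ k)
    (hrel : ∀ i, ∑ k, ρ k * σ i (m k) = 0) :
    ∃ n : κ → ℕ, (∀ k, 0 < n k) ∧ ∑ k, n k • m k = 0 := by
  classical
  choose p hp hpm using fun k => hgen (m k)
  -- A real polynomial of degree `< |ι|` vanishing at the `|ι|` distinct conjugates of `θ` is zero.
  have hP : ∑ k, C (ρ k) * (p k).map (algebraMap ℚ ℝ) = 0 := by
    by_cases hκ : IsEmpty κ
    · simp
    rw [not_isEmpty_iff] at hκ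
    have hcard : 0 < Fintype.card ι := (Nat.zero_le _).trans_lt (hp hκ.some)
    refine eq_zero_of_natDegree_lt_card_of_eval_eq_zero _ hinj (fun i => ?_) ?_
    · rw [eval_finsetSum, ← hrel i]
      refine Finset.sum_congr rfl fun k _ => ?_
      rw [eval_mul, eval_C, hpm k, eval_map, aeval_def, hom_eval₂]
      congr 2
      exact Subsingleton.elim _ _
    · refine (natDegree_sum_le_of_forall_le _ _ (n := Fintype.card ι - 1) fun k _ => ?_).trans_lt
        (by omega)
      refine (natDegree_C_mul_le _ _).trans ((natDegree_map_le).trans ?_)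
      have := hp k
      omega
  obtain ⟨f, hf⟩ := exists_linearMap_pos ρ hρ
  have hcoeff : ∀ n, ∑ k, f (ρ k) * (p k).coeff n = 0 := by
    intro n
    have h := congrArg f (congrArg (fun P => coeff P n) hP)
    simp only [finsetSum_coeff, coeff_C_mul, coeff_map, coeff_zero, map_zero, map_sum] at h
    rw [← h]
    refine Finset.sum_congr rfl fun k _ => ?_
    rw [mul_comm (ρ k), ← Algebra.smul_def, map_smul, smul_eq_mul, mul_comm]
  have hrat : ∑ k, algebraMap ℚ K (f (ρ k)) * m k = 0 := by
    have hQ : ∑ k, f (ρ k) • p k = 0 := by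
      ext n
      simpa [finsetSum_coeff] using hcoeff n
    have h := congrArg (aeval θ) hQ
    simpa [map_sum, ← hpm, Algebra.smul_def] using h
  -- Clear denominators.
  set N : ℕ := ∏ k, (f (ρ k)).den with hN
  have hN0 : 0 < N := Finset.prod_pos fun k _ => (f (ρ k)).den_pos
  have hex : ∀ k, ∃ n : ℕ, (n : ℚ) = N * f (ρ k) := by
    intro k
    obtain ⟨e, he⟩ : (f (ρ k)).den ∣ N := Finset.dvd_prod_of_mem _ (Finset.mem_univ k)
    have hnum : ((f (ρ k)).num.toNat : ℤ) = (f (ρ k)).num :=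
      Int.toNat_of_nonneg (Rat.num_pos.mpr (hf k)).le
    refine ⟨e * (f (ρ k)).num.toNat, ?_⟩
    have h2 : ((f (ρ k)).num.toNat : ℚ) = (f (ρ k)).num := by exact_mod_cast hnum
    have h3 := Rat.mul_den_eq_num (f (ρ k))
    rw [he]
    push_cast
    rw [h2, ← h3]
    ring
  choose n hn using hex
  refine ⟨n, fun k => ?_, ?_⟩
  · have : (0 : ℚ) < n k := by rw [hn]; exact mul_pos (by exact_mod_cast hN0) (hf k)
    exact_mod_cast this
  · have h : ∑ k, n k • m k = N * ∑ k, algebraMap ℚ K (f (ρ k)) * m k := by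
      rw [Finset.mul_sum]
      refine Finset.sum_congr rfl fun k _ => ?_
      have hk := congrArg (algebraMap ℚ K) (hn k)
      rw [map_natCast, map_mul, map_natCast] at hk
      rw [← mul_assoc, ← hk, nsmul_eq_mul]
    rw [h, hrat, mul_zero]

/-- Density of the cone gives a relation between the conjugates of `a` and of elements of `L` with
positive real coefficients, hence one between these elements with positive integral coefficients.
It expresses `-a` as an element of `L`. -/
theorem neg_mem_of_closed (hpos : ∀ i, 0 < σ i θ) (hinj : Function.Injective fun i => σ i θ)
    (hgen : ∀ a : K, ∃ p : ℚ[X], p.natDegree < Fintype.card ι ∧ a = aeval θ p)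
    (L : AddSubmonoid K) (hL : ∀ s ∈ L, (θ * (1 - s))⁻¹ ∈ L) {a : K} (ha : a ∈ L) : -a ∈ L := by
  obtain ⟨c, r, w, y, hc, hr, ⟨q, hq, s, hs, rfl⟩, hy, hrel⟩ :=
    exists_pos_relation _ (dense_ratCone hpos hL hinj) fun i => σ i a
  choose p hp t ht hyt using hy
  obtain ⟨n, hn, hsum⟩ := exists_nat_relation hinj hgen
    (fun k : Option (Option ι) => k.elim a fun k => k.elim s t)
    (fun k => k.elim c fun k => k.elim (c * q) fun i => r i * p i) (by
      have hq' : (0 : ℝ) < q := by exact_mod_cast hq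
      have hp' : ∀ i, (0 : ℝ) < p i := fun i => by exact_mod_cast hp i
      rintro (_ | _ | i)
      · exact hc
      · exact mul_pos hc hq'
      · exact mul_pos (hr i) (hp' i)) (by
      intro i
      have h := congrFun hrel i
      simp only [Pi.add_apply, Pi.smul_apply, Finset.sum_apply, smul_eq_mul, Pi.zero_apply,
        hyt] at h
      simp only [Fintype.sum_option, Option.elim_none, Option.elim_some, mul_assoc]
      rw [← h]
      ring)
  simp only [Fintype.sum_option, Option.elim_none, Option.elim_some] at hsum
  obtain ⟨k, hk⟩ : ∃ k, n none = k + 1 := ⟨n none - 1, by have := hn none; omega⟩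
  have : -a = k • a + (n (some none) • s + ∑ i, n (some (some i)) • t i) := by
    rw [hk, succ_nsmul] at hsum
    rw [neg_eq_iff_add_eq_zero, ← hsum]
    abel
  rw [this]
  exact L.add_mem (L.nsmul_mem ha _) (L.add_mem (L.nsmul_mem hs _)
    (L.sum_mem fun i _ => L.nsmul_mem (ht i) _))

end

/-! ### Rooted trees and their values -/

/-- Sum of `f` over the neighbours of `v`. -/
noncomputable def nbrSum {V : Type} [Fintype V] (T : SimpleGraph V) (f : V → ℝ) (v : V) : ℝ :=
  open Classical in ∑ w, if T.Adj v w then f w else 0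

/-- The disjoint union of two rooted graphs, plus an edge joining the roots. -/
def joinRoots {V W : Type} (T : SimpleGraph V) (U : SimpleGraph W) (r : V) (u : W) :
    SimpleGraph (V ⊕ W) :=
  T.sum U ⊔ SimpleGraph.edge (Sum.inl r) (Sum.inr u)

theorem joinRoots_isTree {V W : Type} [Fintype V] [Fintype W] {T : SimpleGraph V}
    {U : SimpleGraph W}
    (hT : T.IsTree) (hU : U.IsTree) (r : V) (u : W) : (joinRoots T U r u).IsTree := by
  classical
  rw [SimpleGraph.isTree_iff_connected_and_card] at hT hU ⊢
  refine ⟨hT.1.sum_sup_edge hU.1, ?_⟩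
  have h1 : Nat.card (joinRoots T U r u).edgeSet = Nat.card (T.sum U).edgeSet + 1 := by
    have hcard : ∀ (H : SimpleGraph (V ⊕ W)) [Fintype H.edgeSet],
        Nat.card H.edgeSet = H.edgeFinset.card := fun H _ => by
      rw [Nat.card_eq_fintype_card, ← SimpleGraph.edgeFinset_card]
    rw [joinRoots, hcard, hcard]
    exact SimpleGraph.card_edgeFinset_sup_edge _ (by simp) (by simp)
  rw [h1, Nat.card_congr (SimpleGraph.edgeSetSumEquiv), Nat.card_sum, Nat.card_sum, ← hT.2, ← hU.2]
  ring

theorem nbrSum_join_inl {V W : Type} [Fintype V] [Fintype W] [DecidableEq V]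
    (T : SimpleGraph V) (U : SimpleGraph W)
    (r : V) (u : W) (f : V → ℝ) (g : W → ℝ) (v : V) :
    nbrSum (joinRoots T U r u) (Sum.elim f g) (Sum.inl v) =
      nbrSum T f v + if v = r then g u else 0 := by
  classical
  simp only [nbrSum, joinRoots, Fintype.sum_sum_type]
  congr 1
  · refine Finset.sum_congr rfl fun w _ => ?_
    simp [SimpleGraph.edge_adj]
  · by_cases hv : v = r <;> simp [SimpleGraph.edge_adj, hv]

theorem nbrSum_join_inr {V W : Type} [Fintype V] [Fintype W] [DecidableEq W]
    (T : SimpleGraph V) (U : SimpleGraph W)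
    (r : V) (u : W) (f : V → ℝ) (g : W → ℝ) (w : W) :
    nbrSum (joinRoots T U r u) (Sum.elim f g) (Sum.inr w) =
      nbrSum U g w + if w = u then f r else 0 := by
  classical
  simp only [nbrSum, joinRoots, Fintype.sum_sum_type]
  rw [add_comm]
  congr 1
  · refine Finset.sum_congr rfl fun w _ => ?_
    simp [SimpleGraph.edge_adj]
  · by_cases hv : w = u <;> simp [SimpleGraph.edge_adj, hv]

theorem nbrSum_smul {V : Type} [Fintype V] (T : SimpleGraph V) (c : ℝ) (f : V → ℝ) (v : V) :
    nbrSum T (c • f) v = c * nbrSum T f v := by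
  simp [nbrSum, Finset.mul_sum]

theorem nbrSum_add {V : Type} [Fintype V] (T : SimpleGraph V) (f g : V → ℝ) (v : V) :
    nbrSum T (f + g) v = nbrSum T f v + nbrSum T g v := by
  simp only [nbrSum, ← Finset.sum_add_distrib]
  refine Finset.sum_congr rfl fun w _ => ?_
  split_ifs <;> simp

/-- The numbers generated from `0` by `(a, b) ↦ a + (lam - b)⁻¹` for `b ≠ lam`. Each is the sum over
the neighbours of the root of a function on a rooted tree with value `1` at the root and satisfying
the eigenvector equation for `lam` off the root; see `TreeValue.realize`. -/
inductive TreeValue (lam : ℝ) : ℝ → Prop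
  | zero : TreeValue lam 0
  | step {a b : ℝ} : TreeValue lam a → TreeValue lam b → b ≠ lam → TreeValue lam (a + (lam - b)⁻¹)

theorem TreeValue.add {lam a b : ℝ} (ha : TreeValue lam a) (hb : TreeValue lam b) :
    TreeValue lam (a + b) := by
  induction hb with
  | zero => simpa using ha
  | step _ hd hne ih _ => rw [← add_assoc]; exact ih.step hd hne

theorem TreeValue.inv {lam b : ℝ} (hb : TreeValue lam b) (hne : b ≠ lam) :
    TreeValue lam (lam - b)⁻¹ := by
  simpa using TreeValue.zero.step hb hne

/-- The constructor `step` corresponds to joining the roots by an edge, after scaling the function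
on the second tree by `(lam - b)⁻¹` so that the eigenvector equation holds at its root. -/
theorem TreeValue.realize {lam s : ℝ} (hs : TreeValue lam s) :
    ∃ (V : Type) (_ : Fintype V) (T : SimpleGraph V) (r : V) (f : V → ℝ), T.IsTree ∧ f r = 1 ∧
      nbrSum T f r = s ∧ ∀ v, v ≠ r → nbrSum T f v = lam * f v := by
  classical
  induction hs with
  | zero =>
    refine ⟨Unit, inferInstance, ⊥, (), 1, SimpleGraph.IsTree.of_subsingleton, rfl, ?_, ?_⟩
    · simp [nbrSum]
    · intro v hv; exact absurd rfl hv
  | @step a b _ _ hne iha ihb =>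
    obtain ⟨V, _, T, r, f, hT, hr, hsum, hf⟩ := iha
    obtain ⟨W, _, U, u, g, hU, hu, hgsum, hg⟩ := ihb
    have hne' : lam - b ≠ 0 := sub_ne_zero.mpr hne.symm
    refine ⟨V ⊕ W, inferInstance, joinRoots T U r u, Sum.inl r, Sum.elim f ((lam - b)⁻¹ • g),
      joinRoots_isTree hT hU r u, by simpa using hr, ?_, ?_⟩
    · rw [nbrSum_join_inl, hsum]; simp [hu]
    · rintro (v | w) hv
      · have : v ≠ r := fun e => hv (by rw [e])
        rw [nbrSum_join_inl, if_neg this, add_zero, hf v this]; rfl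
      · rw [nbrSum_join_inr, nbrSum_smul]
        by_cases hw : w = u
        · subst hw
          simp only [if_pos, hgsum, hr, Sum.elim_inr, Pi.smul_apply, smul_eq_mul, hu]
          field_simp
          ring
        · rw [if_neg hw, hg w hw]
          simp only [Sum.elim_inr, Pi.smul_apply, smul_eq_mul]
          ring

/-! ### Multiplicities of tree eigenvalues -/

/-- The functions on `T` vanishing at the root `r` and satisfying the eigenvector equation for `μ`
at every other vertex. -/
noncomputable def rootedEigenspace {V : Type} [Fintype V] (T : SimpleGraph V) (r : V) (μ : ℝ) :
    Submodule ℝ (V → ℝ) where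
  carrier := {f | f r = 0 ∧ ∀ v, v ≠ r → nbrSum T f v = μ * f v}
  add_mem' := by
    rintro f g ⟨hf0, hf⟩ ⟨hg0, hg⟩
    refine ⟨by simp [hf0, hg0], fun v hv => ?_⟩
    rw [nbrSum_add, hf v hv, hg v hv, Pi.add_apply]; ring
  zero_mem' := ⟨rfl, fun v _ => by simp [nbrSum]⟩
  smul_mem' := by
    rintro c f ⟨hf0, hf⟩
    refine ⟨by simp [hf0], fun v hv => ?_⟩
    rw [nbrSum_smul, hf v hv, Pi.smul_apply, smul_eq_mul]; ring

section
open Module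

theorem rootedEigenspace_join_mono {V W : Type} [Fintype V] [Fintype W] (T : SimpleGraph V)
    (U : SimpleGraph W) (r : V) (u : W) (μ : ℝ) (f : V → ℝ) (g : W → ℝ)
    (hf : f ∈ rootedEigenspace T r μ) (hg : ∀ w, nbrSum U g w = μ * g w) :
    Sum.elim f g ∈ rootedEigenspace (joinRoots T U r u) (Sum.inl r) μ := by
  classical
  obtain ⟨hf0, hf⟩ := hf
  refine ⟨hf0, ?_⟩
  rintro (v | w) hv
  · have : v ≠ r := fun e => hv (by rw [e])
    rw [nbrSum_join_inl, if_neg this, add_zero, hf v this]; rfl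
  · rw [nbrSum_join_inr, hg, hf0, ite_self, add_zero]; rfl

theorem finrank_le_join {V W : Type} [Fintype V] [Fintype W] (T : SimpleGraph V)
    (U : SimpleGraph W) (r : V) (u : W) (μ : ℝ) :
    finrank ℝ (rootedEigenspace T r μ) ≤
      finrank ℝ (rootedEigenspace (joinRoots T U r u) (Sum.inl r) μ) := by
  let Φ : rootedEigenspace T r μ →ₗ[ℝ] rootedEigenspace (joinRoots T U r u) (Sum.inl r) μ :=
    { toFun := fun f => ⟨Sum.elim f.1 0, rootedEigenspace_join_mono T U r u μ f.1 0 f.2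
        (fun w => by simp [nbrSum])⟩
      map_add' := fun f g => by ext (v | w) <;> simp
      map_smul' := fun c f => by ext (v | w) <;> simp }
  refine LinearMap.finrank_le_finrank_of_injective (f := Φ) fun f g hfg => ?_
  ext v
  exact congrFun (congrArg Subtype.val hfg) (Sum.inl v)

/-- Attaching at the root a tree with eigenvalue `μ`, through a vertex where the eigenvector does
not vanish, enlarges the rooted eigenspace. -/
theorem finrank_add_one_le_join {V W : Type} [Fintype V] [Fintype W] (T : SimpleGraph V)
    (U : SimpleGraph W) (r : V) (u : W) (μ : ℝ) (g : W → ℝ) (hg0 : g u ≠ 0)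
    (hg : ∀ w, nbrSum U g w = μ * g w) :
    finrank ℝ (rootedEigenspace T r μ) + 1 ≤
      finrank ℝ (rootedEigenspace (joinRoots T U r u) (Sum.inl r) μ) := by
  let Φ : (rootedEigenspace T r μ × ℝ) →ₗ[ℝ] rootedEigenspace (joinRoots T U r u) (Sum.inl r) μ :=
    { toFun := fun p => ⟨Sum.elim p.1.1 (p.2 • g), rootedEigenspace_join_mono T U r u μ p.1.1 _
        p.1.2 (fun w => by rw [nbrSum_smul, hg, Pi.smul_apply, smul_eq_mul]; ring)⟩
      map_add' := fun f g => by ext (v | w) <;> simp [add_mul]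
      map_smul' := fun c f => by ext (v | w) <;> simp [mul_assoc] }
  have h := LinearMap.finrank_le_finrank_of_injective (f := Φ) ?_
  · simpa using h
  · rintro ⟨f, a⟩ ⟨f', a'⟩ hfg
    have h := congrArg Subtype.val hfg
    refine Prod.ext (Subtype.ext (funext fun v => congrFun h (Sum.inl v))) ?_
    exact mul_right_cancel₀ hg0 (congrFun h (Sum.inr u))

/-- Hanging below one root a tree for each entry of `l` makes the rooted eigenspace of each `μ`
at least as large as the number of its occurrences in `l`. -/
theorem exists_tree_count_le (l : List ℝ) (hl : ∀ μ ∈ l, TreeValue μ μ) :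
    ∃ (V : Type) (_ : Fintype V) (T : SimpleGraph V) (r : V), T.IsTree ∧
      ∀ μ, l.count μ ≤ finrank ℝ (rootedEigenspace T r μ) := by
  induction l with
  | nil =>
    exact ⟨Unit, inferInstance, ⊥, (), SimpleGraph.IsTree.of_subsingleton, fun μ => by simp⟩
  | cons a l ih =>
    obtain ⟨V, _, T, r, hT, hc⟩ := ih fun μ hμ => hl μ (List.mem_cons_of_mem _ hμ)
    obtain ⟨W, _, U, u, g, hU, hg1, hgu, hg⟩ := (hl a List.mem_cons_self).realize
    refine ⟨V ⊕ W, inferInstance, joinRoots T U r u, Sum.inl r,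
      joinRoots_isTree hT hU r u, fun μ => ?_⟩
    rw [List.count_cons]
    split_ifs with h
    · obtain rfl : a = μ := by simpa using h
      refine (Nat.add_le_add_right (hc a) 1).trans
        (finrank_add_one_le_join T U r u a g (by rw [hg1]; exact one_ne_zero) fun w => ?_)
      by_cases hw : w = u
      · rw [hw, hgu, hg1, mul_one]
      · exact hg w hw
    · exact (hc μ).trans (finrank_le_join T U r u μ)

/-- The eigenvector equation at the root is one more linear condition. -/
theorem finrank_rootedEigenspace_le {V : Type} [Fintype V] [DecidableEq V] (T : SimpleGraph V)
    [DecidableRel T.Adj] (r : V) (μ : ℝ) :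
    finrank ℝ (rootedEigenspace T r μ) ≤ (T.adjMatrix ℝ).charpoly.rootMultiplicity μ + 1 := by
  let φ : rootedEigenspace T r μ →ₗ[ℝ] ℝ :=
    { toFun := fun f => nbrSum T f.1 r
      map_add' := fun f g => nbrSum_add T f.1 g.1 r
      map_smul' := fun c f => nbrSum_smul T c f.1 r }
  have h1 := LinearMap.finrank_range_add_finrank_ker φ
  have h2 : finrank ℝ (LinearMap.range φ) ≤ 1 := by
    simpa using Submodule.finrank_le (LinearMap.range φ)
  have h3 : finrank ℝ (LinearMap.ker φ) ≤
      finrank ℝ (End.eigenspace (Matrix.toLin' (T.adjMatrix ℝ)) μ) := by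
    let Ψ : LinearMap.ker φ →ₗ[ℝ] End.eigenspace (Matrix.toLin' (T.adjMatrix ℝ)) μ :=
      ((rootedEigenspace T r μ).subtype ∘ₗ (LinearMap.ker φ).subtype).codRestrict _ (by
        rintro ⟨⟨f, hf0, hf⟩, hk⟩
        rw [End.mem_eigenspace_iff]
        ext v
        have hv : nbrSum T f v = μ * f v := by
          by_cases hvr : v = r
          · rw [hvr, hf0, mul_zero]; exact hk
          · exact hf v hvr
        simp only [LinearMap.coe_comp, Function.comp_apply, Submodule.subtype_apply,
          Matrix.toLin'_apply, Pi.smul_apply, smul_eq_mul, ← hv]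
        simp only [Matrix.mulVec, dotProduct, nbrSum, SimpleGraph.adjMatrix_apply, ite_mul, one_mul,
          zero_mul]
        exact Finset.sum_congr rfl fun w _ => by congr)
    refine LinearMap.finrank_le_finrank_of_injective (f := Ψ) fun f g hfg => ?_
    have h := congrArg Subtype.val hfg
    exact Subtype.ext (Subtype.ext h)
  have h4 := LinearMap.finrank_eigenspace_le (Matrix.toLin' (T.adjMatrix ℝ)) μ
  rw [Matrix.charpoly_toLin'] at h4
  omega

/-- If every eigenvalue `μ` of `G` is a tree value at `μ`, then `P(G, x)` divides `P(T, x)` for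
some tree `T`. -/
theorem exists_tree_of_treeValue {n : ℕ} (G : SimpleGraph (Fin n)) [DecidableRel G.Adj]
    (hG : ∀ μ, (G.adjMatrix ℝ).charpoly.IsRoot μ → TreeValue μ μ) :
    ∃ (m : ℕ) (T : SimpleGraph (Fin m)) (_ : DecidableRel T.Adj),
      T.IsTree ∧ (G.adjMatrix ℝ).charpoly ∣ (T.adjMatrix ℝ).charpoly := by
  classical
  have hG0 : (G.adjMatrix ℝ).charpoly ≠ 0 := (Matrix.charpoly_monic _).ne_zero
  have hherm : (G.adjMatrix ℝ).IsHermitian := by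
    rw [Matrix.IsHermitian, Matrix.conjTranspose_eq_transpose_of_trivial]
    exact G.isSymm_adjMatrix
  set R := (G.adjMatrix ℝ).charpoly.roots with hR
  obtain ⟨V, _, T, r, hT, hc⟩ := exists_tree_count_le
    (List.replicate (n + 1) R.toList).flatten (by
      intro μ hμ
      obtain ⟨_, hl, hm⟩ := List.mem_flatten.mp hμ
      rw [List.eq_of_mem_replicate hl, Multiset.mem_toList, hR, mem_roots hG0] at hm
      exact hG μ hm)
  let e := Fintype.equivFin V
  have hiso : T.comap e.symm ≃g T := SimpleGraph.Iso.comap e.symm T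
  refine ⟨Fintype.card V, T.comap e.symm, inferInstance, hiso.isTree_iff.mpr hT, ?_⟩
  have hmat : (T.comap e.symm).adjMatrix ℝ = Matrix.reindex e e (T.adjMatrix ℝ) := by
    ext i j
    simp [SimpleGraph.adjMatrix_apply]
  rw [hmat, Matrix.charpoly_reindex,
    hherm.splits_charpoly.dvd_iff_roots_le_roots hG0 (Matrix.charpoly_monic _).ne_zero,
    Multiset.le_iff_count]
  intro μ
  have h1 := (hc μ).trans (finrank_rootedEigenspace_le T r μ)
  rw [List.count_flatten, List.map_replicate, List.sum_replicate, smul_eq_mul,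
    ← Multiset.coe_count, Multiset.coe_toList] at h1
  have h2 : R.count μ ≤ n := by
    refine (Multiset.count_le_card _ _).trans ((card_roots' _).trans ?_)
    rw [Matrix.charpoly_natDegree_eq_dim, Fintype.card_fin]
  rw [count_roots (p := (T.adjMatrix ℝ).charpoly)]
  rcases Nat.eq_zero_or_pos (R.count μ) with h0 | h0
  · rw [h0]; exact Nat.zero_le _
  · nlinarith

end

/-! ### Eigenvalues of graphs are tree eigenvalues -/

/-- Every eigenvalue `lam` of a graph is a tree value at `lam`, hence an eigenvalue of a tree. -/
theorem treeValue_of_isRoot {n : ℕ} (G : SimpleGraph (Fin n)) [DecidableRel G.Adj] (lam : ℝ)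
    (hroot : (G.adjMatrix ℝ).charpoly.IsRoot lam) : TreeValue lam lam := by
  classical
  rcases eq_or_ne lam 0 with rfl | hlam
  · exact TreeValue.zero
  have hmapA : ∀ {R : Type} [CommRing R] [Algebra ℤ R],
      (G.adjMatrix ℤ ^ 2).charpoly.map (algebraMap ℤ R) = (G.adjMatrix R ^ 2).charpoly := by
    intro R _ _
    rw [← Matrix.charpoly_map, Matrix.map_pow]
    congr 2
    ext i j
    simp [SimpleGraph.adjMatrix_apply]
  have hrootsq : (G.adjMatrix ℝ ^ 2).charpoly.IsRoot (lam ^ 2) := by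
    rw [← Matrix.charpoly_toLin', ← Module.End.hasEigenvalue_iff_isRoot_charpoly] at hroot ⊢
    rw [Matrix.toLin'_pow]
    exact hroot.pow 2
  have hsymm : (G.adjMatrix ℝ).conjTranspose = G.adjMatrix ℝ := by
    rw [Matrix.conjTranspose_eq_transpose_of_trivial]
    exact G.isSymm_adjMatrix
  have hpsd : (G.adjMatrix ℝ ^ 2).PosSemidef := by
    have h := Matrix.posSemidef_conjTranspose_mul_self (G.adjMatrix ℝ)
    rwa [hsymm, ← sq] at h
  have hint : IsIntegral ℤ (lam ^ 2) := by
    refine ⟨_, Matrix.charpoly_monic (G.adjMatrix ℤ ^ 2), ?_⟩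
    rw [← eval_map, hmapA]
    exact hrootsq
  have hintQ : IsIntegral ℚ (lam ^ 2) := hint.tower_top
  have hdvd : minpoly ℚ (lam ^ 2) ∣ (G.adjMatrix ℚ ^ 2).charpoly := by
    refine minpoly.dvd _ _ ?_
    rw [← hmapA, aeval_map_algebraMap, aeval_def, ← eval_map, hmapA]
    exact hrootsq
  have hdvdR : (minpoly ℚ (lam ^ 2)).map (algebraMap ℚ ℝ) ∣ (G.adjMatrix ℝ ^ 2).charpoly := by
    have h := Polynomial.map_dvd (algebraMap ℚ ℝ) hdvd
    rwa [← hmapA, Polynomial.map_map, Subsingleton.elim ((algebraMap ℚ ℝ).comp (algebraMap ℤ ℚ))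
      (algebraMap ℤ ℝ), hmapA] at h
  have hsplits : ((minpoly ℚ (lam ^ 2)).map (algebraMap ℚ ℝ)).Splits :=
    hpsd.isHermitian.splits_charpoly.of_dvd (Matrix.charpoly_monic _).ne_zero hdvdR
  let K := IntermediateField.adjoin ℚ {lam ^ 2}
  let θ : K := IntermediateField.AdjoinSimple.gen ℚ (lam ^ 2)
  have hθval : (θ : ℝ) = lam ^ 2 := rfl
  have hθ0 : θ ≠ 0 := fun e => pow_ne_zero 2 hlam (by rw [← hθval, e]; rfl)
  let pb := IntermediateField.adjoin.powerBasis hintQ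
  have hpbgen : pb.gen = θ := IntermediateField.adjoin.powerBasis_gen hintQ
  have hpbdim : pb.dim = (minpoly ℚ (lam ^ 2)).natDegree := rfl
  let _ : Fintype (K →ₐ[ℚ] ℝ) := IntermediateField.fintypeOfAlgHomAdjoinIntegral ℚ hintQ
  have hcard : Fintype.card (K →ₐ[ℚ] ℝ) = (minpoly ℚ (lam ^ 2)).natDegree :=
    Nat.card_eq_fintype_card.symm.trans (IntermediateField.card_algHom_adjoin_integral ℚ hintQ
      (minpoly.irreducible hintQ).separable hsplits)
  let σ : (K →ₐ[ℚ] ℝ) → K →+* ℝ := fun i => i.toRingHom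
  have hinj : Function.Injective fun i => σ i θ := by
    intro i j hij
    refine pb.algHom_ext ?_
    rw [hpbgen]
    exact hij
  have haevalmin : aeval θ (minpoly ℚ (lam ^ 2)) = 0 :=
    IntermediateField.aeval_gen_minpoly ℚ (lam ^ 2)
  have hpos : ∀ i, 0 < σ i θ := by
    intro i
    have hne : σ i θ ≠ 0 := (_root_.map_ne_zero _).mpr hθ0
    refine lt_of_le_of_ne ?_ hne.symm
    have hr : (G.adjMatrix ℝ ^ 2).charpoly.IsRoot (σ i θ) := by
      refine IsRoot.dvd ?_ hdvdR
      rw [IsRoot, eval_map, ← aeval_def]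
      have := congrArg i haevalmin
      rwa [map_zero, ← aeval_algHom_apply] at this
    rw [← mem_roots (Matrix.charpoly_monic _).ne_zero,
      hpsd.isHermitian.roots_charpoly_eq_eigenvalues] at hr
    obtain ⟨j, _, hj⟩ := Multiset.mem_map.mp hr
    rw [← hj]
    exact hpsd.eigenvalues_nonneg j
  have hgen : ∀ a : K, ∃ p : ℚ[X], p.natDegree < Fintype.card (K →ₐ[ℚ] ℝ) ∧ a = aeval θ p := by
    intro a
    obtain ⟨p, hp, hpa⟩ := pb.exists_eq_aeval a
    exact ⟨p, by rw [hcard, ← hpbdim]; exact hp, by rw [← hpbgen]; exact hpa⟩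
  let L : AddSubmonoid K :=
    { carrier := {a | TreeValue lam (lam * (a : ℝ))}
      add_mem' := by
        intro a b ha hb
        have h := TreeValue.add ha hb
        rwa [← mul_add] at h
      zero_mem' := by simpa using TreeValue.zero }
  have hL : ∀ s ∈ L, (θ * (1 - s))⁻¹ ∈ L := by
    intro s hs
    by_cases h1 : s = 1
    · rw [h1, sub_self, mul_zero, inv_zero]
      exact L.zero_mem
    have hs1 : (s : ℝ) ≠ 1 := fun e => h1 (Subtype.ext e)
    have h := TreeValue.inv hs (by simpa [hlam] using hs1)
    change TreeValue lam (lam * (((θ * (1 - s))⁻¹ : K) : ℝ))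
    convert h using 1
    push_cast
    rw [hθval]
    have : (1 : ℝ) - s ≠ 0 := sub_ne_zero.mpr hs1.symm
    rw [show lam - lam * (s : ℝ) = lam * (1 - s) by ring]
    field_simp
  let L' : AddSubgroup K :=
    { L with neg_mem' := fun ha => neg_mem_of_closed hpos hinj hgen L hL ha }
  have hdegZ : (minpoly ℤ (lam ^ 2)).natDegree = (minpoly ℚ (lam ^ 2)).natDegree := by
    rw [minpoly.isIntegrallyClosed_eq_field_fractions' ℚ hint,
      (minpoly.monic hint).natDegree_map]
  have hone : (1 : K) ∈ L' := by
    refine one_mem_of_addSubgroup θ L' hL _ ?_ _ (minpoly.monic hint) hdegZ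
      (minpoly.natDegree_pos hintQ) ?_ hθ0
    · intro q hq hlt h0
      have h1 : aeval (lam ^ 2) (q.map (algebraMap ℤ ℚ)) = 0 := by
        have := congrArg (algebraMap K ℝ) h0
        rw [map_zero, ← aeval_algebraMap_apply] at this
        rwa [aeval_map_algebraMap]
      have h2 := natDegree_le_natDegree (minpoly.min ℚ _ (hq.map _) h1)
      rw [hq.natDegree_map] at h2
      omega
    · refine (algebraMap K ℝ).injective ?_
      rw [map_zero, ← aeval_algebraMap_apply]
      exact minpoly.aeval ℤ (lam ^ 2)
  have h : TreeValue lam (lam * ((1 : K) : ℝ)) := hone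
  simpa using h

/-- For any finite simple graph `G`, there is a finite tree `T` such that the
characteristic polynomial of the adjacency matrix of `G` divides that of `T`. -/
theorem exists_tree_charpoly_dvd {n : ℕ}
    (G : SimpleGraph (Fin n)) [DecidableRel G.Adj] :
    ∃ (m : ℕ) (T : SimpleGraph (Fin m)) (_ : DecidableRel T.Adj),
      T.IsTree ∧ (G.adjMatrix ℝ).charpoly ∣ (T.adjMatrix ℝ).charpoly :=
  exists_tree_of_treeValue G fun μ hμ => treeValue_of_isRoot G μ hμ
end

section
/- For any monic polynomial f with integer coefficients all of whose complex roots are real, there exists another monic polynomial g with integer coefficients all of whose complex roots are real such that the product f·g is unimodal, i.e., the sequence of absolute values of the coefficients of f·g (from constant term to leading term, or equivalently in the reverse order) first (weakly) increases and then (weakly) decreases, with a single peak. (Corollary 3.6.) -/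
/-!
Take `g = (-1) ^ n * f(-X) * (X + 1)` with `n = f.natDegree`. If `f = ∏ (X - r)` over the reals,
then `f * g = (X + 1) * H(X ^ 2)` with `H = ∏ (X - r ^ 2)`, so the `j`-th coefficient of `f * g`
is the `(j / 2)`-th coefficient of `H`, and it is enough that `H` is unimodal in absolute value.

The roots of `H` are nonnegative, so its coefficients alternate in sign, with absolute values `a i`.
Multiplying `H` by `X - s`, `s ≥ 0`, replaces `a i` by `a (i - 1) + s * a i`. If `a` has a peak at
`k`, this is nondecreasing up to `k` and nonincreasing from `k + 1` on; whichever way the step from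
`k` to `k + 1` goes, one of the two is a peak (`exists_unimodal_coeff_prod_X_sub_C`).
-/

open Polynomial

/-- A totally real algebraic polynomial: a monic integer polynomial all of whose
complex roots are real. -/
def IsTotallyRealPoly (p : Polynomial ℤ) : Prop :=
  p.Monic ∧ ∀ z : ℂ, Polynomial.aeval z p = 0 → z.im = 0

/-- A polynomial is unimodal if the sequence of absolute values of its coefficients
(from the constant term up to the leading term) first weakly increases and then
weakly decreases, with a single peak. -/
def IsUnimodalPoly (q : Polynomial ℤ) : Prop :=
  ∃ k, k ≤ q.natDegree ∧
    (∀ i j, i ≤ j → j ≤ k → |q.coeff i| ≤ |q.coeff j|) ∧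
    (∀ i j, k ≤ i → i ≤ j → |q.coeff j| ≤ |q.coeff i|)

/-- A real polynomial with nonnegative roots has coefficients alternating in sign, with unimodal
absolute values `a`. The peak `k` is not required to lie within the degree. -/
lemma exists_unimodal_coeff_prod_X_sub_C (s : Multiset ℝ) (hs : ∀ r ∈ s, 0 ≤ r) :
    ∃ (a : ℕ → ℝ) (k : ℕ), (∀ i, 0 ≤ a i) ∧
      (∀ i, (s.map fun r => X - C r).prod.coeff i = (-1) ^ (i + s.card) * a i) ∧
      (∀ i j, i ≤ j → j ≤ k → a i ≤ a j) ∧ (∀ i j, k ≤ i → i ≤ j → a j ≤ a i) := by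
  induction s using Multiset.induction_on with
  | empty =>
    refine ⟨fun i => if i = 0 then 1 else 0, 0, fun i => by positivity, fun i => ?_,
      fun i j hij hj => ?_, fun i j hi hij => ?_⟩
    · by_cases h : i = 0 <;> simp [h, coeff_one]
    · obtain rfl : i = j := by omega
      exact le_rfl
    · by_cases h : j = 0
      · obtain rfl : i = j := by omega
        exact le_rfl
      · simp only [h, if_false]
        positivity
  | cons s₀ t ih =>
    obtain ⟨a, k, h0, hc, hup, hdown⟩ := ih fun r hr => hs r (Multiset.mem_cons_of_mem hr)
    have hs₀ : 0 ≤ s₀ := hs s₀ (Multiset.mem_cons_self _ _)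
    -- `b` gives the absolute coefficients of the product with `X - s₀`.
    let b : ℕ → ℝ := fun i => Nat.casesOn i (s₀ * a 0) fun m => a m + s₀ * a (m + 1)
    have bz : b 0 = s₀ * a 0 := rfl
    have bs : ∀ m, b (m + 1) = a m + s₀ * a (m + 1) := fun _ => rfl
    have hb0 : ∀ i, 0 ≤ b i := by
      rintro (_ | i)
      · exact mul_nonneg hs₀ (h0 0)
      · exact add_nonneg (h0 i) (mul_nonneg hs₀ (h0 (i + 1)))
    have hbc : ∀ i, ((s₀ ::ₘ t).map fun r => X - C r).prod.coeff i =
        (-1) ^ (i + (s₀ ::ₘ t).card) * b i := by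
      rintro (_ | i)
      · simp only [Multiset.map_cons, Multiset.prod_cons, sub_mul, coeff_sub, coeff_C_mul,
          coeff_X_mul_zero, hc, Multiset.card_cons, bz]
        ring
      · simp only [Multiset.map_cons, Multiset.prod_cons, sub_mul, coeff_sub, coeff_C_mul,
          coeff_X_mul, hc, Multiset.card_cons, bs]
        ring
    have hstep_up : ∀ i, i < k → b i ≤ b (i + 1) := by
      rintro (_ | i) hi
      · rw [bz, bs]
        have := mul_le_mul_of_nonneg_left (hup 0 (0 + 1) (by omega) (by omega)) hs₀
        linarith [h0 0]
      · rw [bs, bs]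
        have := mul_le_mul_of_nonneg_left (hup (i + 1) (i + 1 + 1) (by omega) (by omega)) hs₀
        linarith [hup i (i + 1) (by omega) (by omega)]
    have hstep_down : ∀ i, k + 1 ≤ i → b (i + 1) ≤ b i := by
      rintro (_ | i) hi
      · omega
      · rw [bs, bs]
        have := mul_le_mul_of_nonneg_left (hdown (i + 1) (i + 1 + 1) (by omega) (by omega)) hs₀
        linarith [hdown i (i + 1) (by omega) (by omega)]
    have of_steps : ∀ l, (∀ i, i < l → b i ≤ b (i + 1)) → (∀ i, l ≤ i → b (i + 1) ≤ b i) →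
        (∀ i j, i ≤ j → j ≤ l → b i ≤ b j) ∧ (∀ i j, l ≤ i → i ≤ j → b j ≤ b i) := by
      intro l hu hd
      refine ⟨fun i j hij => ?_, fun i j hi hij => ?_⟩
      · induction j, hij using Nat.le_induction with
        | base => exact fun _ => le_rfl
        | succ j _ ih => exact fun hj => (ih (by omega)).trans (hu j (by omega))
      · induction j, hij using Nat.le_induction with
        | base => exact le_rfl
        | succ j hij ih => exact (hd j (by omega)).trans ih
    rcases le_total (b k) (b (k + 1)) with h | h
    · refine ⟨b, k + 1, hb0, hbc, of_steps (k + 1) (fun i hi => ?_) hstep_down⟩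
      rcases Nat.lt_succ_iff_lt_or_eq.mp hi with hi | rfl
      · exact hstep_up i hi
      · exact h
    · refine ⟨b, k, hb0, hbc, of_steps k hstep_up fun i hi => ?_⟩
      rcases hi.eq_or_lt with rfl | hi
      · exact h
      · exact hstep_down i hi

lemma IsTotallyRealPoly.exists_map_eq_prod {f : Polynomial ℤ} (hf : IsTotallyRealPoly f) :
    ∃ s : Multiset ℝ, f.map (Int.castRingHom ℝ) = (s.map fun r => X - C r).prod := by
  refine ⟨(f.map (Int.castRingHom ℂ)).roots.map Complex.re, ?_⟩
  apply map_injective Complex.ofRealHom Complex.ofReal_injective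
  have hprod := (IsAlgClosed.splits (f.map (Int.castRingHom ℂ))).eq_prod_roots_of_monic
    (hf.1.map _)
  rw [Polynomial.map_map, Polynomial.map_multiset_prod, Multiset.map_map, Multiset.map_map,
    show Complex.ofRealHom.comp (Int.castRingHom ℝ) = Int.castRingHom ℂ from RingHom.ext_int _ _]
  conv_lhs => rw [hprod]
  congr 1
  refine Multiset.map_congr rfl fun z hz => ?_
  have hz0 : z.im = 0 := hf.2 z (by
    have := (mem_roots'.mp hz).2
    rwa [IsRoot.def, eval_map, ← algebraMap_int_eq, ← aeval_def] at this)
  have hre : (z.re : ℂ) = z := Complex.ext rfl (by simp [hz0])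
  simp [hre]

/-- Multiplying `H(X ^ 2)` by `X + 1` fills its odd gaps, listing every coefficient twice. -/
lemma coeff_X_add_one_mul_expand_two (H : Polynomial ℝ) (j : ℕ) :
    ((X + 1) * expand ℝ 2 H).coeff j = H.coeff (j / 2) := by
  rcases j with _ | j
  · simp [add_mul, coeff_expand]
  · rw [add_mul, one_mul, coeff_add, coeff_X_mul, coeff_expand two_pos, coeff_expand two_pos]
    rcases Nat.even_or_odd' j with ⟨m, rfl | rfl⟩
    · rw [if_pos (by omega), if_neg (by omega), add_zero]
      congr 1
      omega
    · rw [if_neg (by omega), if_pos (by omega), zero_add]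

/-- Corollary 3.6: every totally real algebraic polynomial can be unimodalized,
i.e. for every monic integer polynomial `f` with only real roots there is another
such polynomial `g` with `f * g` unimodal. -/
theorem exists_unimodalizing_factor (f : Polynomial ℤ) (hf : IsTotallyRealPoly f) :
    ∃ g : Polynomial ℤ, IsTotallyRealPoly g ∧ IsUnimodalPoly (f * g) := by
  obtain ⟨s, hs⟩ := hf.exists_map_eq_prod
  have hcard : f.natDegree = s.card := by
    rw [← hf.1.natDegree_map (Int.castRingHom ℝ), hs, natDegree_multiset_prod_X_sub_C_eq_card]
  let g : Polynomial ℤ := (-1) ^ f.natDegree * f.comp (-X) * (X + 1)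
  have hgm : g.Monic :=
    hf.1.neg_one_pow_natDegree_mul_comp_neg_X.mul (by simpa using monic_X_add_C (1 : ℤ))
  have hfg : (f * g).map (Int.castRingHom ℝ) =
      (X + 1) * expand ℝ 2 ((s.map (· ^ 2)).map fun r => X - C r).prod := by
    have h1 : (((-1) ^ s.card * f.comp (-X) : Polynomial ℤ)).map (Int.castRingHom ℝ) =
        (s.map fun r => X + C r).prod := by
      simp only [Polynomial.map_mul, Polynomial.map_pow, Polynomial.map_neg, Polynomial.map_one,
        Polynomial.map_comp, hs, map_X]
      -- Distribute the sign `(-1) ^ card` over the factors, one to each.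
      rw [multiset_prod_comp, Multiset.map_map, ← Multiset.card_map
        ((fun p : Polynomial ℝ => p.comp (-X)) ∘ fun r => X - C r) s,
        ← Multiset.prod_map_neg, Multiset.map_map]
      congr 1
      refine Multiset.map_congr rfl fun r _ => ?_
      simp [add_comm]
    simp only [g, hcard]
    rw [Polynomial.map_mul, Polynomial.map_mul, h1, hs, ← mul_assoc, ← Multiset.prod_map_mul,
      mul_comm, map_multiset_prod, Multiset.map_map, Multiset.map_map]
    congr 1
    · simp
    · congr 1
      refine Multiset.map_congr rfl fun r _ => ?_
      simp only [Function.comp_apply, map_sub, expand_X, expand_C]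
      rw [C_pow]
      ring
  obtain ⟨a, k, h0, hc, hup, hdown⟩ := exists_unimodal_coeff_prod_X_sub_C (s.map (· ^ 2)) (by
    intro r hr
    obtain ⟨t, -, rfl⟩ := Multiset.mem_map.mp hr
    exact sq_nonneg t)
  have habs : ∀ j, ((|(f * g).coeff j| : ℤ) : ℝ) = a (j / 2) := by
    intro j
    have h : (((f * g).coeff j : ℤ) : ℝ) = _ := (coeff_map (Int.castRingHom ℝ) j).symm
    rw [Int.cast_abs, h, hfg, coeff_X_add_one_mul_expand_two, hc, abs_mul, abs_pow, abs_neg,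
      abs_one, one_pow, one_mul, abs_of_nonneg (h0 _)]
  refine ⟨g, ⟨hgm, fun z hz => ?_⟩, 2 * k, ?_, fun i j hij hj => ?_, fun i j hi hij => ?_⟩
  · simp only [g, map_mul, map_pow, map_neg, map_one, map_add, aeval_X, aeval_comp,
      mul_eq_zero] at hz
    rcases hz with (hz | hz) | hz
    · exact absurd hz (pow_ne_zero _ (by simp))
    · simpa using hf.2 _ hz
    · simpa using congrArg Complex.im hz
  · -- Past the degree the coefficients vanish, so the peak value would be below the leading `1`.
    by_contra! hlt
    have h1 := hup ((f * g).natDegree / 2) k (by omega) le_rfl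
    have h2 := habs (2 * k)
    rw [coeff_eq_zero_of_natDegree_lt hlt, Nat.mul_div_cancel_left _ two_pos] at h2
    rw [← habs, ← h2, (hf.1.mul hgm).coeff_natDegree] at h1
    norm_num at h1
  · have := hup (i / 2) (j / 2) (by omega) (by omega)
    rw [← habs, ← habs] at this
    exact_mod_cast this
  · have := hdown (i / 2) (j / 2) (by omega) (by omega)
    rw [← habs, ← habs] at this
    exact_mod_cast this
end
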